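/- Let Q be the symmetric V×V real matrix with Q_{ij}=Q_{ji}=q⁰_{ij}/2 for every edge (i,j)∈E, Q_{ij}=0 when {i,j} is not an edge, and Q_{ii}=0, and let a_i = c_i − ∑_{j:(i,j)∈E} q⁰_{ij}. Then for every U ⊆ V, g(U) = ∑_{i∈U} a_i + ∑_{i∈U}∑_{j∈U} Q_{ij} + ∑_{(i,j)∈E} q⁰_{ij}; consequently U minimizes the GVC1 objective g if and only if U minimizes the UBQP objective ∑_{i∈U} a_i + ∑_{i∈U}∑_{j∈U} Q_{ij}. -/

import Mathlib

open Finset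

variable {V : Type*} [Fintype V] [DecidableEq V]

/-- Edges of `E` with no endpoint in `U`. -/
def E0 (E : Finset (V × V)) (U : Finset V) : Finset (V × V) :=
  E.filter fun e => e.1 ∉ U ∧ e.2 ∉ U

/-- Edges of `E` with exactly one endpoint in `U`. -/
def E1 (E : Finset (V × V)) (U : Finset V) : Finset (V × V) :=
  E.filter fun e => (e.1 ∈ U ∧ e.2 ∉ U) ∨ (e.1 ∉ U ∧ e.2 ∈ U)

/-- Edges of `E` with both endpoints in `U`. -/
def E2 (E : Finset (V × V)) (U : Finset V) : Finset (V × V) :=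
  E.filter fun e => e.1 ∈ U ∧ e.2 ∈ U

/-- Edges of `E` incident to vertex `i`. -/
def incident (E : Finset (V × V)) (i : V) : Finset (V × V) :=
  E.filter fun e => e.1 = i ∨ e.2 = i

/-- The GVC objective `f`. -/
def gvcObj (E : Finset (V × V)) (c : V → ℝ) (q0 q1 q2 : V × V → ℝ) (U : Finset V) : ℝ :=
  ∑ i ∈ U, c i + ∑ e ∈ E0 E U, q0 e + ∑ e ∈ E1 E U, q1 e + ∑ e ∈ E2 E U, q2 e

/-!
Seen from `U`, an edge `e` has zero, one or two endpoints in `U`. Its weight is then counted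
`0`, `1` or `2` times in `∑ i ∈ U, ∑ e ∈ incident E i, q e`, and `0`, `0` or `1` times in
`∑ i ∈ U, ∑ j ∈ U, Q i j`. Since `1 - (0, 1, 2) + (0, 0, 1) = (1, 0, 0)`, the total weight minus the
first sum plus the second is the weight of the edges avoiding `U`.
-/

section Objectives

variable {α M : Type*}

/-- The GVC1 objective: the weight of the chosen vertices plus the weight of the edges they leave
uncovered. -/
def gvc1Obj [DecidableEq α] [AddCommMonoid M] (E : Finset (α × α)) (c : α → M) (q : α × α → M)
    (U : Finset α) : M :=
  ∑ i ∈ U, c i + ∑ e ∈ E0 E U, q e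

/-- The objective of unconstrained binary quadratic programming, `xᵀ Q x + aᵀ x`, where the binary
vector `x` is encoded as the set `U` of coordinates equal to `1`. -/
def ubqpObj [AddCommMonoid M] (a : α → M) (Q : α → α → M) (U : Finset α) : M :=
  ∑ i ∈ U, a i + ∑ i ∈ U, ∑ j ∈ U, Q i j

/-- The linear coefficients of the UBQP instance associated with a GVC1 instance: the cost of a
vertex reduced by the weight of the edges it covers. -/
def reducedCost [DecidableEq α] [AddCommGroup M] (E : Finset (α × α)) (c : α → M) (q : α × α → M)
    (i : α) : M :=
  c i - ∑ e ∈ incident E i, q e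

end Objectives

section EdgeSums

variable {α M : Type*} [DecidableEq α] [AddCommMonoid M]

theorem sum_E0_add_sum_E1_add_sum_E2 (E : Finset (α × α)) (U : Finset α) (q : α × α → M) :
    ∑ e ∈ E0 E U, q e + ∑ e ∈ E1 E U, q e + ∑ e ∈ E2 E U, q e = ∑ e ∈ E, q e := by
  simp only [E0, E1, E2, sum_filter, ← sum_add_distrib]
  refine sum_congr rfl fun e _ => ?_
  by_cases h₁ : e.1 ∈ U <;> by_cases h₂ : e.2 ∈ U <;> simp [h₁, h₂]

theorem card_filter_eq_or_eq {x y : α} (hxy : x ≠ y) (U : Finset α) :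
    #{i ∈ U | x = i ∨ y = i} = (if x ∈ U then 1 else 0) + if y ∈ U then 1 else 0 := by
  have hdisj : Disjoint {i ∈ U | x = i} {i ∈ U | y = i} :=
    disjoint_filter.2 fun _ _ hx hy => hxy (hx.trans hy.symm)
  rw [filter_or, card_union_of_disjoint hdisj, filter_eq, filter_eq]
  split_ifs <;> rfl

theorem sum_sum_incident {E : Finset (α × α)} (hE : ∀ e ∈ E, e.1 ≠ e.2) (U : Finset α)
    (q : α × α → M) :
    ∑ i ∈ U, ∑ e ∈ incident E i, q e = ∑ e ∈ E1 E U, q e + 2 • ∑ e ∈ E2 E U, q e := by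
  calc ∑ i ∈ U, ∑ e ∈ incident E i, q e
      = ∑ e ∈ E, #{i ∈ U | e.1 = i ∨ e.2 = i} • q e := by
        simp only [incident, sum_filter]
        rw [sum_comm]
        simp only [← sum_filter, sum_const]
    _ = ∑ e ∈ E1 E U, q e + 2 • ∑ e ∈ E2 E U, q e := by
        simp only [E1, E2, sum_filter, smul_sum, ← sum_add_distrib]
        refine sum_congr rfl fun e he => ?_
        rw [card_filter_eq_or_eq (hE e he)]
        by_cases h₁ : e.1 ∈ U <;> by_cases h₂ : e.2 ∈ U <;> simp [h₁, h₂]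

theorem sum_sum_eq_sum_E2 {E : Finset (α × α)} (hE : ∀ e ∈ E, e.swap ∉ E) {Q : α → α → M}
    (hQ : ∀ i j, (i, j) ∉ E → (j, i) ∉ E → Q i j = 0) (U : Finset α) :
    ∑ i ∈ U, ∑ j ∈ U, Q i j = ∑ e ∈ E2 E U, (Q e.1 e.2 + Q e.2 e.1) := by
  have hdisj : Disjoint (E2 E U) ((E2 E U).image Prod.swap) := by
    simp only [disjoint_left, E2, mem_image, mem_filter]
    rintro _ ⟨hswap, -⟩ ⟨e, ⟨he, -⟩, rfl⟩
    exact hE e he hswap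
  have hsub : E2 E U ∪ (E2 E U).image Prod.swap ⊆ U ×ˢ U := by
    simp only [subset_iff, E2, mem_union, mem_image, mem_filter, mem_product]
    rintro _ (⟨-, hU⟩ | ⟨e, ⟨-, hU⟩, rfl⟩)
    exacts [hU, hU.symm]
  have hzero : ∀ p ∈ U ×ˢ U, p ∉ E2 E U ∪ (E2 E U).image Prod.swap → Q p.1 p.2 = 0 := by
    rintro ⟨i, j⟩ hU hp
    obtain ⟨hi, hj⟩ := mem_product.1 hU
    refine hQ i j (fun hij => hp (mem_union_left _ ?_)) (fun hji => hp (mem_union_right _ ?_))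
    · exact mem_filter.2 ⟨hij, hi, hj⟩
    · exact mem_image.2 ⟨(j, i), mem_filter.2 ⟨hji, hj, hi⟩, rfl⟩
  calc ∑ i ∈ U, ∑ j ∈ U, Q i j
      = ∑ p ∈ E2 E U ∪ (E2 E U).image Prod.swap, Q p.1 p.2 := by
        rw [← sum_product', sum_subset hsub hzero]
    _ = ∑ e ∈ E2 E U, (Q e.1 e.2 + Q e.2 e.1) := by
        rw [sum_union hdisj, sum_image Prod.swap_injective.injOn, sum_add_distrib]
        simp only [Prod.fst_swap, Prod.snd_swap]

end EdgeSums

section Reduction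

variable {α M : Type*} [DecidableEq α] [AddCommGroup M]

theorem gvc1Obj_eq_ubqpObj_add {E : Finset (α × α)} (hE : ∀ e ∈ E, e.swap ∉ E)
    (c : α → M) {q : α × α → M} {Q : α → α → M}
    (hQedge : ∀ e ∈ E, Q e.1 e.2 + Q e.2 e.1 = q e)
    (hQzero : ∀ i j, (i, j) ∉ E → (j, i) ∉ E → Q i j = 0) (U : Finset α) :
    gvc1Obj E c q U = ubqpObj (reducedCost E c q) Q U + ∑ e ∈ E, q e := by
  have hloopless : ∀ e ∈ E, e.1 ≠ e.2 := fun e he heq =>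
    hE e he (by rwa [show e.swap = e from Prod.ext heq.symm heq])
  have hquad : ∑ i ∈ U, ∑ j ∈ U, Q i j = ∑ e ∈ E2 E U, q e := by
    rw [sum_sum_eq_sum_E2 hE hQzero]
    exact sum_congr rfl fun e he => hQedge e (mem_filter.1 he).1
  simp only [gvc1Obj, ubqpObj, reducedCost, sum_sub_distrib]
  rw [hquad, sum_sum_incident hloopless, ← sum_E0_add_sum_E1_add_sum_E2 E U q]
  abel

/-- Only the sums `Q i j + Q j i` matter, so the weight of an edge may be split between its two
entries of `Q` in any way: evenly, or all in one entry as for triangular `Q`. -/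
theorem gvc1_eq_ubqp_general [Preorder M] [IsOrderedAddMonoid M] {E : Finset (α × α)}
    (hE : ∀ e ∈ E, e.swap ∉ E) (c : α → M) {q : α × α → M} {Q : α → α → M}
    (hQedge : ∀ e ∈ E, Q e.1 e.2 + Q e.2 e.1 = q e)
    (hQzero : ∀ i j, (i, j) ∉ E → (j, i) ∉ E → Q i j = 0) :
    (∀ U, gvc1Obj E c q U = ubqpObj (reducedCost E c q) Q U + ∑ e ∈ E, q e) ∧
      ∀ U, (∀ W, gvc1Obj E c q U ≤ gvc1Obj E c q W) ↔
        ∀ W, ubqpObj (reducedCost E c q) Q U ≤ ubqpObj (reducedCost E c q) Q W := by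
  have hobj := gvc1Obj_eq_ubqpObj_add hE c hQedge hQzero
  refine ⟨hobj, fun U => forall_congr' fun W => ?_⟩
  rw [hobj U, hobj W, add_le_add_iff_right]

end Reduction

/-- GVC1 as an unconstrained binary quadratic program. -/
theorem gvc1_eq_ubqp
    (E : Finset (V × V))
    (hsimple : ∀ e ∈ E, e.1 ≠ e.2)
    (honce : ∀ e ∈ E, (e.2, e.1) ∉ E)
    (c : V → ℝ) (q0 : V × V → ℝ)
    (Q : V → V → ℝ)
    (hQsym : ∀ i j, Q i j = Q j i)
    (hQedge : ∀ e ∈ E, Q e.1 e.2 = q0 e / 2)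
    (hQzero : ∀ i j, (i, j) ∉ E → (j, i) ∉ E → Q i j = 0)
    (hQdiag : ∀ i, Q i i = 0)
    (a : V → ℝ) (ha : ∀ i, a i = c i - ∑ e ∈ incident E i, q0 e)
    (g : Finset V → ℝ)
    (hg : ∀ U : Finset V, g U = ∑ i ∈ U, c i + ∑ e ∈ E0 E U, q0 e) :
    (∀ U : Finset V,
        g U = ∑ i ∈ U, a i + ∑ i ∈ U, ∑ j ∈ U, Q i j + ∑ e ∈ E, q0 e) ∧
    (∀ U : Finset V,
        (∀ W : Finset V, g U ≤ g W) ↔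
          (∀ W : Finset V,
            (∑ i ∈ U, a i + ∑ i ∈ U, ∑ j ∈ U, Q i j) ≤
              (∑ i ∈ W, a i + ∑ i ∈ W, ∑ j ∈ W, Q i j))) := by
  obtain rfl : g = gvc1Obj E c q0 := funext hg
  obtain rfl : a = reducedCost E c q0 := funext ha
  exact gvc1_eq_ubqp_general honce c
    (fun e he => by rw [hQsym e.2, hQedge e he, add_halves]) hQzero
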